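/- arXiv:1405.3502 — 3 statements merged into one kernel-verified Lean document; each statement's English description precedes it below -/
import Mathlib

section
/- For every real a > 1 and every x with |x| < π/(2a), the integral h(x) = ∫₀^∞ exp(−y^a e^{iax}) dy converges absolutely, and the function h is differentiable on the open interval (−π/(2a), π/(2a)) with h′(x) = −i·h(x). -/
open MeasureTheory

noncomputable section

/-- The Jones function `g(x,y) = exp(−y^a e^{iax})`, where `y^a` is the real power. -/
def jonesG (a x y : ℝ) : ℂ :=
  Complex.exp (-(y ^ a : ℝ) * Complex.exp (Complex.I * a * x))

/-- The function `h(x) = ∫₀^∞ g(x,y) dy`. -/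
def jonesH (a x : ℝ) : ℂ :=
  ∫ y in Set.Ioi (0 : ℝ), jonesG a x y

lemma jonesG_norm (a x y : ℝ) :
    ‖jonesG a x y‖ = Real.exp (-(Real.cos (a * x)) * y ^ a) := by
  have h : Complex.exp (Complex.I * a * x) = Complex.exp (((a * x : ℝ) : ℂ) * Complex.I) := by
    congr 1; push_cast; ring
  rw [jonesG, Complex.norm_exp, h, ← Complex.ofReal_neg, Complex.re_ofReal_mul,
    Complex.exp_ofReal_mul_I_re]
  congr 1; ring

lemma jones_cos_pos {a x : ℝ} (ha : 1 < a) (hx : |x| < Real.pi / (2 * a)) :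
    0 < Real.cos (a * x) := by
  have h0 : 0 < a := by linarith
  have h1 : |a * x| < Real.pi / 2 := by
    rw [abs_mul, abs_of_pos h0]
    calc a * |x| < a * (Real.pi / (2 * a)) := by gcongr
      _ = Real.pi / 2 := by field_simp
  rw [abs_lt] at h1
  exact Real.cos_pos_of_mem_Ioo ⟨h1.1, h1.2⟩

lemma jonesG_cont {a : ℝ} (ha : 1 < a) (x : ℝ) : Continuous (fun y => jonesG a x y) := by
  have h : Continuous (fun y : ℝ => y ^ a) := Real.continuous_rpow_const (by linarith)
  unfold jonesG
  fun_prop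

lemma jonesG_int {a x : ℝ} (ha : 1 < a) (hx : |x| < Real.pi / (2 * a)) {s : ℝ} (hs : 0 ≤ s) :
    IntegrableOn (fun y => ((y ^ s : ℝ) : ℂ) * jonesG a x y) (Set.Ioi (0 : ℝ)) volume := by
  have h := integrableOn_rpow_mul_exp_neg_mul_rpow (p := a) (s := s) (by linarith) (by linarith)
    (jones_cos_pos ha hx)
  have hc : Continuous (fun y : ℝ => y ^ s) := Real.continuous_rpow_const hs
  have hg := jonesG_cont ha x
  refine Integrable.mono' h (by fun_prop) ?_
  filter_upwards [ae_restrict_mem measurableSet_Ioi] with y hy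
  have hy : 0 < y := hy
  rw [norm_mul, jonesG_norm, Complex.norm_real, Real.norm_of_nonneg (by positivity)]

lemma jonesG_deriv_x (a x y : ℝ) :
    HasDerivAt (fun t => jonesG a t y)
      (-(Complex.I * a * Complex.exp (Complex.I * a * x)) * (((y ^ a : ℝ) : ℂ) * jonesG a x y))
      x := by
  unfold jonesG
  have h1 : HasDerivAt (fun t : ℝ => Complex.I * a * (t : ℂ)) (Complex.I * a) x := by
    simpa using (Complex.ofRealCLM.hasDerivAt (x := x)).const_mul (Complex.I * a)
  convert! ((h1.cexp).const_mul (-((y ^ a : ℝ) : ℂ))).cexp using 1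
  ring

lemma jonesG_deriv_y {a : ℝ} (x : ℝ) {y : ℝ} (hy : 0 < y) :
    HasDerivAt (fun t : ℝ => (t : ℂ) * jonesG a x t)
      (jonesG a x y + -(a * Complex.exp (Complex.I * a * x)) * (((y ^ a : ℝ) : ℂ) * jonesG a x y))
      y := by
  have h0 : HasDerivAt (fun t : ℝ => ((t ^ a : ℝ) : ℂ)) ((a * y ^ (a - 1) : ℝ) : ℂ) y :=
    (Real.hasDerivAt_rpow_const (Or.inl hy.ne')).ofReal_comp
  have h1 : HasDerivAt (fun t : ℝ => (t : ℂ)) 1 y := by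
    simpa using (hasDerivAt_id y).ofReal_comp
  have h2 : HasDerivAt (fun t : ℝ => jonesG a x t) _ y :=
    ((h0.neg).mul_const (Complex.exp (Complex.I * a * x))).cexp
  convert! h1.mul h2 using 1
  have h3 : ((y ^ a : ℝ) : ℂ) = y * ((y ^ (a - 1) : ℝ) : ℂ) := by
    rw [← Complex.ofReal_mul, Real.rpow_sub_one hy.ne']
    congr 1; field_simp
  simp only [jonesG, Pi.neg_apply]
  rw [h3]
  push_cast
  ring

/-- For `a > 1` and `|x| < π/(2a)`, the integral `h(x) = ∫₀^∞ exp(−y^a e^{iax}) dy`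
converges absolutely, and `h` is differentiable on `(−π/(2a), π/(2a))` with
`h′(x) = −i·h(x)`. -/
theorem jonesH_integrable_hasDerivAt (a : ℝ) (ha : 1 < a) :
    (∀ x : ℝ, |x| < Real.pi / (2 * a) →
      IntegrableOn (fun y => jonesG a x y) (Set.Ioi (0 : ℝ)) volume) ∧
    ∀ x ∈ Set.Ioo (-(Real.pi / (2 * a))) (Real.pi / (2 * a)),
      HasDerivAt (fun t => jonesH a t) (-Complex.I * jonesH a x) x := by
  have h0 : 0 < a := by linarith
  have key : ∀ x : ℝ, |x| < Real.pi / (2 * a) →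
      IntegrableOn (fun y => jonesG a x y) (Set.Ioi (0 : ℝ)) volume := by
    intro x hx
    simpa using jonesG_int ha hx le_rfl
  refine ⟨key, fun x hx => ?_⟩
  have hx' : |x| < Real.pi / (2 * a) := abs_lt.2 hx
  obtain ⟨ρ, hρ1, hρ2⟩ := exists_between hx'
  have hρ0 : 0 < ρ := lt_of_le_of_lt (abs_nonneg x) hρ1
  have hc := jones_cos_pos ha (show |ρ| < _ by rwa [abs_of_pos hρ0])
  have hbi := (integrableOn_rpow_mul_exp_neg_mul_rpow (p := a) (s := a) (by linarith) h0
    hc).const_mul a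
  have hca : Continuous (fun y : ℝ => y ^ a) := Real.continuous_rpow_const h0.le
  have hg := jonesG_cont ha x
  have hmain := (hasDerivAt_integral_of_dominated_loc_of_deriv_le
    (μ := volume.restrict (Set.Ioi (0 : ℝ)))
    (F := fun t y => jonesG a t y) (x₀ := x) (s := Set.Ioo (-ρ) ρ)
    (F' := fun t y => -(Complex.I * a * Complex.exp (Complex.I * a * t)) *
      (((y ^ a : ℝ) : ℂ) * jonesG a t y))
    (bound := fun y => a * (y ^ a * Real.exp (-(Real.cos (a * ρ)) * y ^ a)))
    (Ioo_mem_nhds (abs_lt.1 hρ1).1 (abs_lt.1 hρ1).2)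
    (Filter.Eventually.of_forall fun t => (jonesG_cont ha t).aestronglyMeasurable)
    (key x hx') (Continuous.aestronglyMeasurable (by fun_prop)) ?_ hbi
    (Filter.Eventually.of_forall fun y t _ => jonesG_deriv_x a t y)).2
  · have hgi := key x hx'
    have hgai := (jonesG_int ha hx' h0.le).const_mul (-(a * Complex.exp (Complex.I * a * x)))
    have hyg : IntegrableOn (fun y : ℝ => (y : ℂ) * jonesG a x y) (Set.Ioi 0) := by
      simpa using jonesG_int ha hx' zero_le_one
    have hd := fun y (hy : y ∈ Set.Ioi (0 : ℝ)) => jonesG_deriv_y (a := a) x hy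
    have hdi := hgi.add hgai
    have hlim := tendsto_zero_of_hasDerivAt_of_integrableOn_Ioi hd hdi hyg
    have hI := integral_Ioi_of_hasDerivAt_of_tendsto
      (Continuous.continuousWithinAt (by fun_prop)) hd hdi hlim
    rw [integral_add hgi hgai] at hI
    convert! hmain using 1
    have e : ∀ y : ℝ, -(Complex.I * a * Complex.exp (Complex.I * a * x)) *
        (((y ^ a : ℝ) : ℂ) * jonesG a x y) = Complex.I *
        (-(a * Complex.exp (Complex.I * a * x)) * (((y ^ a : ℝ) : ℂ) * jonesG a x y)) := by
      intro y; ring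
    simp_rw [e]
    rw [integral_const_mul, jonesH]
    simp only [Complex.ofReal_zero, zero_mul, sub_zero] at hI
    linear_combination (-Complex.I) * hI
  · filter_upwards [ae_restrict_mem measurableSet_Ioi] with y hy t ht
    have hy : 0 < y := hy
    have hn : ‖Complex.exp (Complex.I * a * t)‖ = 1 := by
      rw [show Complex.I * a * t = ((a * t : ℝ) : ℂ) * Complex.I by push_cast; ring,
        Complex.norm_exp_ofReal_mul_I]
    have hya : 0 < y ^ a := by positivity
    rw [norm_mul, norm_neg, norm_mul, norm_mul, norm_mul, hn, jonesG_norm, Complex.norm_I,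
      Complex.norm_real, Complex.norm_real, Real.norm_of_nonneg h0.le,
      Real.norm_of_nonneg hya.le, one_mul, mul_one]
    have hcos : Real.cos (a * ρ) ≤ Real.cos (a * t) := by
      rw [← Real.cos_abs (a * t)]
      have h1 : |a * t| ≤ a * ρ := by
        rw [abs_mul, abs_of_pos h0]
        have := (abs_lt.2 ht).le
        gcongr
      refine Real.cos_le_cos_of_nonneg_of_le_pi (abs_nonneg _) ?_ h1
      have : a * ρ ≤ a * (Real.pi / (2 * a)) := by gcongr
      have e : a * (Real.pi / (2 * a)) = Real.pi / 2 := by field_simp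
      linarith [Real.pi_pos]
    gcongr

end
end

section
/- For every real a > 1 and every x with |x| < π/(2a), h(x) = Γ(1/a + 1)·e^{−ix}; in particular h is bounded on (−π/(2a), π/(2a)) and is Lebesgue integrable on that interval. -/
open MeasureTheory

noncomputable section

theorem jones_phi_diff (a : ℝ) (ha : 1 < a) (z : ℂ) (hz : 0 < z.re) :
    DifferentiableAt ℂ (fun z : ℂ => ∫ y in Set.Ioi (0 : ℝ), Complex.exp (-(y ^ a : ℝ) * z)) z := by
  have hr : 0 < z.re / 2 := by linarith
  have hm : ∀ w : ℂ, AEStronglyMeasurable (fun y : ℝ => Complex.exp (-(y ^ a : ℝ) * w))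
      (volume.restrict (Set.Ioi (0 : ℝ))) := fun w =>
    (by fun_prop : Measurable (fun y : ℝ => Complex.exp (-(y ^ a : ℝ) * w))).aestronglyMeasurable
  have hnorm : ∀ (w : ℂ) (y : ℝ), ‖Complex.exp (-(y ^ a : ℝ) * w)‖ = Real.exp (-w.re * y ^ a) := by
    intro w y
    rw [Complex.norm_exp]
    congr 1
    rw [← Complex.ofReal_neg, Complex.re_ofReal_mul]
    ring
  have key := hasDerivAt_integral_of_dominated_loc_of_deriv_le
    (μ := volume.restrict (Set.Ioi (0 : ℝ)))
    (F := fun (z : ℂ) (y : ℝ) => Complex.exp (-(y ^ a : ℝ) * z))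
    (F' := fun (z : ℂ) (y : ℝ) => Complex.exp (-(y ^ a : ℝ) * z) * (-(y ^ a : ℝ)))
    (bound := fun y : ℝ => y ^ a * Real.exp (-(z.re / 2) * y ^ a))
    (x₀ := z) (s := Metric.ball z (z.re / 2)) (Metric.ball_mem_nhds z hr)
    (Filter.Eventually.of_forall hm) ?_ ?_ ?_ ?_ ?_
  · exact key.2.differentiableAt
  · refine Integrable.mono' (g := fun y : ℝ => y ^ (0 : ℝ) * Real.exp (-z.re * y ^ a)) ?_ (hm z) ?_
    · exact integrableOn_rpow_mul_exp_neg_mul_rpow (by norm_num) (by linarith) hz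
    · refine Filter.Eventually.of_forall fun y => ?_
      rw [hnorm]; simp
  · exact (by fun_prop : Measurable (fun y : ℝ =>
      Complex.exp (-(y ^ a : ℝ) * z) * (-(y ^ a : ℝ) : ℂ))).aestronglyMeasurable
  · refine (ae_restrict_iff' measurableSet_Ioi).2 (Filter.Eventually.of_forall ?_)
    intro y hy w hw
    have hy0 : (0 : ℝ) ≤ y ^ a := Real.rpow_nonneg (le_of_lt hy) a
    have hw' : z.re / 2 ≤ w.re := by
      have h1 : |(w - z).re| ≤ ‖w - z‖ := Complex.abs_re_le_norm _
      have h2 : ‖w - z‖ < z.re / 2 := by simpa [dist_eq_norm] using hw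
      have h3 := neg_abs_le (w - z).re
      simp only [Complex.sub_re] at h1 h3
      linarith
    rw [norm_mul, hnorm, norm_neg, Complex.norm_real, Real.norm_of_nonneg hy0, mul_comm]
    gcongr
  · exact integrableOn_rpow_mul_exp_neg_mul_rpow (by linarith) (by linarith) hr
  · refine Filter.Eventually.of_forall fun y w _ => ?_
    have := ((hasDerivAt_id w).const_mul (-(y ^ a : ℝ) : ℂ)).cexp
    simpa using this

theorem jones_phi_eq (a : ℝ) (ha : 1 < a) (z : ℂ) (hz : 0 < z.re) :
    ∫ y in Set.Ioi (0 : ℝ), Complex.exp (-(y ^ a : ℝ) * z) =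
      z ^ ((-1 / a : ℝ) : ℂ) * (Real.Gamma (1 / a + 1) : ℂ) := by
  have hopen : IsOpen {z : ℂ | 0 < z.re} := isOpen_lt continuous_const Complex.continuous_re
  have hconv : Convex ℝ {z : ℂ | 0 < z.re} := convex_halfSpace_re_gt 0
  have hf : AnalyticOnNhd ℂ
      (fun z : ℂ => ∫ y in Set.Ioi (0 : ℝ), Complex.exp (-(y ^ a : ℝ) * z)) {z : ℂ | 0 < z.re} :=
    DifferentiableOn.analyticOnNhd
      (fun z hz => (jones_phi_diff a ha z hz).differentiableWithinAt) hopen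
  have hg : AnalyticOnNhd ℂ
      (fun z : ℂ => z ^ ((-1 / a : ℝ) : ℂ) * (Real.Gamma (1 / a + 1) : ℂ)) {z : ℂ | 0 < z.re} := by
    refine DifferentiableOn.analyticOnNhd (fun z hz => ?_) hopen
    refine DifferentiableAt.differentiableWithinAt ?_
    refine DifferentiableAt.mul_const ?_ _
    exact differentiableAt_id.cpow_const (Or.inl hz)
  have hreal : ∀ b : ℝ, 0 < b → ∫ y in Set.Ioi (0 : ℝ), Complex.exp (-(y ^ a : ℝ) * (b : ℂ)) =
      (b : ℂ) ^ ((-1 / a : ℝ) : ℂ) * (Real.Gamma (1 / a + 1) : ℂ) := by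
    intro b hb
    rw [← Complex.ofReal_cpow hb.le, ← Complex.ofReal_mul,
      ← integral_exp_neg_mul_rpow (by linarith : 0 < a) hb, ← integral_complex_ofReal]
    congr 1
    funext y
    push_cast
    congr 1
    ring
  refine hf.eqOn_of_preconnected_of_frequently_eq hg hconv.isPreconnected
    (z₀ := 1) (by simp) ?_ hz
  have ht : Filter.Tendsto (fun t : ℝ => (t : ℂ)) (nhdsWithin 1 {1}ᶜ) (nhdsWithin 1 {1}ᶜ) := by
    refine tendsto_nhdsWithin_iff.2 ⟨?_, ?_⟩
    · exact (by simpa using Complex.continuous_ofReal.tendsto 1 : Filter.Tendsto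
        (fun t : ℝ => (t : ℂ)) (nhds 1) (nhds 1)).mono_left nhdsWithin_le_nhds
    · filter_upwards [self_mem_nhdsWithin] with t h
      simpa using h
  refine ht.frequently (Filter.Eventually.frequently ?_)
  filter_upwards [nhdsWithin_le_nhds (lt_mem_nhds (zero_lt_one' ℝ))] with t h
  exact hreal t h


theorem jonesH_aux (a : ℝ) (ha : 1 < a) (x : ℝ) (hx : |x| < Real.pi / (2 * a)) :
    jonesH a x = (Real.Gamma (1 / a + 1) : ℂ) * Complex.exp (-Complex.I * x) := by
  have ha0 : 0 < a := by linarith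
  have hax : |a * x| < Real.pi / 2 := by
    rw [abs_mul, abs_of_pos ha0]
    rw [lt_div_iff₀ (by positivity)] at hx
    linarith
  obtain ⟨h1, h2⟩ := abs_lt.1 hax
  have hpi := Real.pi_pos
  have hre : 0 < (Complex.exp (Complex.I * a * x)).re := by
    rw [show Complex.I * a * x = ((a * x : ℝ) : ℂ) * Complex.I by push_cast; ring,
      Complex.exp_ofReal_mul_I_re]
    exact Real.cos_pos_of_mem_Ioo ⟨by linarith, h2⟩
  unfold jonesH jonesG
  rw [jones_phi_eq a ha _ hre, mul_comm]
  congr 1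
  rw [Complex.cpow_def_of_ne_zero (Complex.exp_ne_zero _), Complex.log_exp]
  · congr 1
    have : (a : ℂ) ≠ 0 := by exact_mod_cast ha0.ne'
    push_cast
    field_simp
  · rw [show Complex.I * a * x = ((a * x : ℝ) : ℂ) * Complex.I by push_cast; ring]
    simp only [Complex.im_ofReal_mul, Complex.I_im]
    linarith
  · rw [show Complex.I * a * x = ((a * x : ℝ) : ℂ) * Complex.I by push_cast; ring]
    simp only [Complex.im_ofReal_mul, Complex.I_im]
    linarith

/-- For `a > 1` and `|x| < π/(2a)`, `h(x) = Γ(1/a + 1)·e^{−ix}`; in particular `h` is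
bounded on `(−π/(2a), π/(2a))` and Lebesgue integrable on that interval. -/
theorem jonesH_eq_Gamma_mul_exp (a : ℝ) (ha : 1 < a) :
    (∀ x : ℝ, |x| < Real.pi / (2 * a) →
      jonesH a x = (Real.Gamma (1 / a + 1) : ℂ) * Complex.exp (-Complex.I * x)) ∧
    (∃ C : ℝ, ∀ x ∈ Set.Ioo (-(Real.pi / (2 * a))) (Real.pi / (2 * a)), ‖jonesH a x‖ ≤ C) ∧
    IntegrableOn (fun x => jonesH a x)
      (Set.Ioo (-(Real.pi / (2 * a))) (Real.pi / (2 * a))) volume := by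
  refine ⟨jonesH_aux a ha, ⟨‖(Real.Gamma (1 / a + 1) : ℂ)‖, ?_⟩, ?_⟩
  · intro x hx
    rw [jonesH_aux a ha x (abs_lt.2 hx), norm_mul, Complex.norm_exp]
    simp
  · have hc : Continuous (fun x : ℝ =>
        (Real.Gamma (1 / a + 1) : ℂ) * Complex.exp (-Complex.I * x)) := by fun_prop
    refine IntegrableOn.congr_fun (f := fun x : ℝ =>
        (Real.Gamma (1 / a + 1) : ℂ) * Complex.exp (-Complex.I * x)) ?_
      (fun x hx => (jonesH_aux a ha x (abs_lt.2 hx)).symm) measurableSet_Ioo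
    exact (hc.integrableOn_Icc).mono_set Set.Ioo_subset_Icc_self

end
end

section
/- (Lemma 17, one-dimensional case: Henstock–Kurzweil integrable functions lie in SD².) Take n = 1 and let ξ_k = E_k : ℝ → ℝ be the k-th (scalar) generating function, which has bounded total variation V(ξ_k) with V := sup_k V(ξ_k) < ∞. If f : ℝ → ℝ is Henstock–Kurzweil integrable on every compact interval and has finite Alexiewicz norm ‖f‖_A = sup_{a ≤ b} |(HK)∫_a^b f(x) dx| < ∞, then for every k the Henstock–Kurzweil integral F_k(f) = (HK)∫ ξ_k(x) f(x) dx exists, and ‖f‖_{SD²} = (Σ_{k≥1} 2^(−k) |F_k(f)|²)^{1/2} ≤ V·‖f‖_A < ∞. -/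
open MeasureTheory Real Filter Topology ENNReal

noncomputable section

/-- The scalar generating function `ξ_{l,c}(t) = e^(t−c)·3^(−(π+|c|))` for
`|t−c| ≤ π/2^(l+1)`, and `0` otherwise (case `n = 1`). -/
def xi1 (l : ℕ) (c t : ℝ) : ℝ :=
  if |t - c| ≤ Real.pi / 2 ^ (l + 1) then Real.exp (t - c) * (3 : ℝ) ^ (-(Real.pi + |c|))
  else 0

/-- The `k`-th generating function `ξ_k`: for `k ↦ (l,i)` (here `l = (b k).1 + 1 ≥ 1`,
`i = (b k).2`), `ξ_k` is `ξ_{l,xⁱ}` restricted to the closed interval centered at `xⁱ` of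
length `π/a_l`, `a_l = 3·2^(l−1)` (and `0` outside). -/
def xiK (x : ℕ → ℝ) (b : ℕ ≃ ℕ × ℕ) (k : ℕ) (t : ℝ) : ℝ :=
  if |t - x (b k).2| ≤ Real.pi / (2 * (3 * 2 ^ (b k).1)) then
    xi1 ((b k).1 + 1) (x (b k).2) t
  else 0

/-- `x` is an enumeration of the rational numbers. -/
def IsRationalEnum1 (x : ℕ → ℝ) : Prop :=
  Function.Injective x ∧ Set.range x = {t : ℝ | ∃ q : ℚ, t = (q : ℝ)}

/-- `y` is the Henstock–Kurzweil integral of `f` over `[a,b]`. -/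
def HKHasIntegral (f : ℝ → ℝ) (a b : ℝ) (h : a < b) (y : ℝ) : Prop :=
  BoxIntegral.HasIntegral (ι := Fin 1) (E := ℝ) (F := ℝ)
    ⟨fun _ => a, fun _ => b, fun _ => h⟩
    BoxIntegral.IntegrationParams.Henstock (fun p => f (p 0))
    BoxIntegral.BoxAdditiveMap.volume y

/-- The one-dimensional box `(u, v]`. -/
def hkBox (u v : ℝ) (h : u < v) : BoxIntegral.Box (Fin 1) := ⟨fun _ => u, fun _ => v, fun _ => h⟩

theorem hkBox_eq (J : BoxIntegral.Box (Fin 1)) :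
    J = hkBox (J.lower 0) (J.upper 0) (J.lower_lt_upper 0) := by
  cases J with
  | mk l u h =>
    unfold hkBox
    congr 1 <;> funext i <;> rw [Subsingleton.elim i 0]

theorem hkBox_le {u v u' v' : ℝ} (h : u < v) (h' : u' < v') (h1 : u' ≤ u) (h2 : v ≤ v') :
    hkBox u v h ≤ hkBox u' v' h' := by
  rw [BoxIntegral.Box.le_iff_bounds]
  exact ⟨fun _ => h1, fun _ => h2⟩

theorem hkBox_mem_Icc {u v : ℝ} (h : u < v) (x : Fin 1 → ℝ) :
    x ∈ BoxIntegral.Box.Icc (hkBox u v h) ↔ u ≤ x 0 ∧ x 0 ≤ v := by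
  rw [BoxIntegral.Box.Icc_def, Set.mem_Icc, Pi.le_def, Pi.le_def]
  simp [hkBox]

theorem hk_mem_Icc (J : BoxIntegral.Box (Fin 1)) (x : Fin 1 → ℝ) :
    x ∈ BoxIntegral.Box.Icc J ↔ J.lower 0 ≤ x 0 ∧ x 0 ≤ J.upper 0 := by
  rw [BoxIntegral.Box.Icc_def, Set.mem_Icc, Pi.le_def, Pi.le_def]
  simp

/-- The box-additive increment of a function of one variable. -/
def hkInc (F : ℝ → ℝ) (I₀ : WithTop (BoxIntegral.Box (Fin 1))) :
    BoxIntegral.BoxAdditiveMap (Fin 1) ℝ I₀ :=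
  BoxIntegral.BoxAdditiveMap.ofMapSplitAdd (fun J => F (J.upper 0) - F (J.lower 0)) I₀ (by
    intro I _ i x hx
    rw [BoxIntegral.Box.splitLower_def hx, BoxIntegral.Box.splitUpper_def hx]
    obtain rfl : i = 0 := Subsingleton.elim _ _
    simp only [Option.elim']
    change (F (Function.update I.upper 0 x 0) - F (I.lower 0)) +
      (F (I.upper 0) - F (Function.update I.lower 0 x 0)) = _
    simp)

theorem hkInc_apply (F : ℝ → ℝ) (I₀ : WithTop (BoxIntegral.Box (Fin 1)))
    (J : BoxIntegral.Box (Fin 1)) : hkInc F I₀ J = F (J.upper 0) - F (J.lower 0) := rfl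

theorem hk_vol (J : BoxIntegral.Box (Fin 1)) (y : ℝ) :
    (BoxIntegral.BoxAdditiveMap.volume (ι := Fin 1) (E := ℝ)) J y
      = (J.upper 0 - J.lower 0) * y := by
  rw [BoxIntegral.BoxAdditiveMap.volume_apply]; simp

section prim
open BoxIntegral

variable {f : ℝ → ℝ} {Ival : ℝ → ℝ → ℝ}

theorem hk_integral
    (hInt : ∀ a c : ℝ, ∀ h : a < c, HKHasIntegral f a c h (Ival a c)) (J : Box (Fin 1)) :
    BoxIntegral.integral J IntegrationParams.Henstock (fun p => f (p 0))
      BoxAdditiveMap.volume = Ival (J.lower 0) (J.upper 0) := by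
  have h := (hInt _ _ (J.lower_lt_upper 0)).integral_eq
  rw [← h]
  congr 1
  exact hkBox_eq J

theorem hk_add
    (hInt : ∀ a c : ℝ, ∀ h : a < c, HKHasIntegral f a c h (Ival a c)) {u t v : ℝ}
    (h1 : u < t) (h2 : t < v) : Ival u t + Ival t v = Ival u v := by
  have hI : Integrable (hkBox u v (h1.trans h2)) IntegrationParams.Henstock
    (fun p => f (p 0)) BoxAdditiveMap.volume := (hInt u v (h1.trans h2)).integrable
  have h := hI.toBoxAdditive.map_split_add le_rfl 0 t
  have hx : t ∈ Set.Ioo ((hkBox u v (h1.trans h2)).lower 0) ((hkBox u v (h1.trans h2)).upper 0) :=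
    ⟨h1, h2⟩
  rw [Box.splitLower_def hx, Box.splitUpper_def hx] at h
  simp only [Option.elim'] at h
  have e : ∀ J, hI.toBoxAdditive J = Ival (J.lower 0) (J.upper 0) := fun J => hk_integral hInt J
  rw [e, e, e] at h
  simpa [hkBox] using h

theorem hk_small
    (hInt : ∀ a c : ℝ, ∀ h : a < c, HKHasIntegral f a c h (Ival a c)) (t ε : ℝ) (hε : 0 < ε) :
    ∃ δ > 0, ∀ u v, u < v → u ≤ t → t ≤ v → t - δ ≤ u → v ≤ t + δ → |Ival u v| ≤ ε := by
  have hI : Integrable (hkBox (t-1) (t+1) (by linarith)) IntegrationParams.Henstock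
    (fun p => f (p 0)) BoxAdditiveMap.volume := (hInt _ _ _).integrable
  set r := hI.convergenceR (ε/2) 0 (fun _ => t) with hr
  have hr0 : 0 < (r : ℝ) := r.2
  have hft : 0 < 4 * (|f t| + 1) := by positivity
  refine ⟨min (min 1 r) (ε / (4 * (|f t| + 1))), by positivity, ?_⟩
  intro u v huv hut htv hu hv
  have m1 : min (min 1 (r:ℝ)) (ε / (4 * (|f t| + 1))) ≤ 1 := (min_le_left _ _).trans (min_le_left _ _)
  have m2 : min (min 1 (r:ℝ)) (ε / (4 * (|f t| + 1))) ≤ r := (min_le_left _ _).trans (min_le_right _ _)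
  have m3 : min (min 1 (r:ℝ)) (ε / (4 * (|f t| + 1))) ≤ ε / (4 * (|f t| + 1)) := min_le_right _ _
  have hJ : hkBox u v huv ≤ hkBox (t-1) (t+1) (by linarith) := hkBox_le _ _ (by linarith) (by linarith)
  have hmem : (fun _ => t : Fin 1 → ℝ) ∈ Box.Icc (hkBox (t-1) (t+1) (by linarith)) := by
    rw [hkBox_mem_Icc]; constructor <;> linarith
  have hb : IntegrationParams.Henstock.MemBaseSet (hkBox (t-1) (t+1) (by linarith)) 0
      (hI.convergenceR (ε/2) 0) (TaggedPrepartition.single _ _ hJ (fun _ => t) hmem) := by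
    refine ⟨?_, ?_, ?_, ?_⟩
    · rw [TaggedPrepartition.isSubordinate_single]
      intro y hy
      rw [hkBox_mem_Icc] at hy
      rw [Metric.mem_closedBall, dist_pi_le_iff hr0.le]
      intro i
      rw [Subsingleton.elim i 0, Real.dist_eq, abs_le]
      constructor <;> linarith [hy.1, hy.2]
    · intro _
      rw [TaggedPrepartition.isHenstock_single_iff, hkBox_mem_Icc]
      exact ⟨hut, htv⟩
    · intro h; exact absurd h (by decide)
    · intro h; exact absurd h (by decide)
  have key := hI.dist_integralSum_sum_integral_le_of_memBaseSet (half_pos hε) hb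
  have e1 : integralSum (fun p : Fin 1 → ℝ => f (p 0)) BoxAdditiveMap.volume
      (TaggedPrepartition.single _ _ hJ (fun _ => t) hmem) = (v - u) * f t := by
    unfold integralSum
    change ∑ J ∈ {hkBox u v huv}, _ = _
    rw [Finset.sum_singleton, hk_vol]
    rfl
  have e2 : ∑ J ∈ (TaggedPrepartition.single _ _ hJ (fun _ => t) hmem).boxes,
      integral J IntegrationParams.Henstock (fun p : Fin 1 → ℝ => f (p 0)) BoxAdditiveMap.volume
        = Ival u v := by
    change ∑ J ∈ {hkBox u v huv}, _ = _
    rw [Finset.sum_singleton, hk_integral hInt]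
    rfl
  rw [e1, e2, Real.dist_eq] at key
  have h3 : |(v - u) * f t| ≤ ε / 2 := by
    rw [abs_mul, abs_of_pos (sub_pos.2 huv)]
    have : v - u ≤ 2 * (ε / (4 * (|f t| + 1))) := by linarith
    have h5 : 2 * (ε / (4 * (|f t| + 1))) * (|f t| + 1) = ε / 2 := by field_simp; norm_num
    have := mul_le_mul this (by linarith : |f t| ≤ |f t| + 1) (abs_nonneg _) (by positivity)
    linarith
  have h4 : Ival u v = (v - u) * f t - ((v - u) * f t - Ival u v) := by ring
  rw [h4]
  linarith [abs_sub ((v - u) * f t) ((v - u) * f t - Ival u v)]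

theorem hk_prim
    (hInt : ∀ a c : ℝ, ∀ h : a < c, HKHasIntegral f a c h (Ival a c)) (p : ℝ) :
    ∃ F : ℝ → ℝ, Continuous F ∧ F p = 0 ∧ ∀ u v, u < v → F v - F u = Ival u v := by
  let F : ℝ → ℝ := fun t => if p < t then Ival p t else if t < p then - Ival t p else 0
  have hF : ∀ u v, u < v → F v - F u = Ival u v := by
    intro u v huv
    simp only [F]
    rcases lt_trichotomy p u with h | h | h
    · have := hk_add hInt h huv
      rw [if_pos (h.trans huv), if_pos h]; linarith
    · subst h; simp [huv]
    · rw [if_neg h.le.not_gt, if_pos h]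
      rcases lt_trichotomy p v with h' | h' | h'
      · have := hk_add hInt h h'
        rw [if_pos h']; linarith
      · subst h'; simp
      · have := hk_add hInt huv h'
        rw [if_neg h'.le.not_gt, if_pos h']; linarith
  refine ⟨F, ?_, by simp [F], hF⟩
  rw [continuous_iff_continuousAt]
  intro t
  rw [Metric.continuousAt_iff]
  intro ε hε
  obtain ⟨δ, hδ, h⟩ := hk_small hInt t (ε/2) (half_pos hε)
  refine ⟨δ, hδ, ?_⟩
  intro s hs
  rw [Real.dist_eq, abs_lt] at hs
  rw [Real.dist_eq]
  rcases lt_trichotomy s t with hst | hst | hst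
  · rw [abs_sub_comm, hF s t hst]
    linarith [h s t hst hst.le le_rfl (by linarith) (by linarith)]
  · subst hst; simpa using hε
  · rw [hF t s hst]
    linarith [h t s hst le_rfl hst.le (by linarith) (by linarith)]

/-- Multiplication by a bounded function: the integral with respect to `dF` gives the
HK integral of the product. -/
theorem hk_mul
    (hInt : ∀ a c : ℝ, ∀ h : a < c, HKHasIntegral f a c h (Ival a c))
    (F : ℝ → ℝ) (hF : ∀ u v, u < v → F v - F u = Ival u v)
    (z : ℝ → ℝ) (M : ℝ) (hz : ∀ t, |z t| ≤ M) (a c : ℝ) (hac : a < c) (y : ℝ)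
    (hy : HasIntegral (hkBox a c hac) IntegrationParams.Henstock (fun p => z (p 0))
      (hkInc F ⊤).toSMul y) :
    HKHasIntegral (fun t => z t * f t) a c hac y := by
  have hI : Integrable (hkBox a c hac) IntegrationParams.Henstock
    (fun p => f (p 0)) BoxAdditiveMap.volume := (hInt _ _ _).integrable
  have hM : 0 ≤ M := (abs_nonneg _).trans (hz 0)
  change HasIntegral (hkBox a c hac) _ _ _ _
  refine HasIntegral.of_mul (1 + M * 2) ?_
  intro ε hε
  obtain ⟨r, hr, H⟩ := hasIntegral_iff.1 hy ε hε
  refine ⟨fun c x => min (r c x) (hI.convergenceR ε c x), fun _ h => absurd h (by decide), ?_⟩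
  intro d T hT hp
  have hT1 : IntegrationParams.Henstock.MemBaseSet _ d (r d) T :=
    hT.mono _ le_rfl le_rfl fun x _ => min_le_left _ _
  have hT2 : IntegrationParams.Henstock.MemBaseSet _ d (hI.convergenceR ε d) T :=
    hT.mono _ le_rfl le_rfl fun x _ => min_le_right _ _
  have h1 := H d T hT1 hp
  set e : Box (Fin 1) → ℝ := fun J =>
    (J.upper 0 - J.lower 0) * f (T.tag J 0) - Ival (J.lower 0) (J.upper 0) with he
  have hsub : ∀ P : Box (Fin 1) → Prop, |∑ J ∈ (T.filter P).boxes, e J| ≤ ε := by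
    intro P
    have := hI.dist_integralSum_sum_integral_le_of_memBaseSet hε (hT2.filter P)
    rw [Real.dist_eq] at this
    unfold integralSum at this
    rw [← Finset.sum_sub_distrib] at this
    convert this using 3 with J hJ
    rw [hk_vol, hk_integral hInt]
    rfl
  have habs : ∑ J ∈ T.boxes, |e J| ≤ 2 * ε := by
    classical
    have hb : ∀ P : Box (Fin 1) → Prop, (T.filter P).boxes = T.boxes.filter P := by
      intro P; ext J; simp [TaggedPrepartition.mem_filter]
    have hp1 : |∑ J ∈ T.boxes.filter (fun J => 0 ≤ e J), e J| ≤ ε := by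
      have := hsub (fun J => 0 ≤ e J)
      rw [hb] at this
      convert this
    have hp2 : |∑ J ∈ T.boxes.filter (fun J => ¬ 0 ≤ e J), e J| ≤ ε := by
      have := hsub (fun J => ¬ 0 ≤ e J)
      rw [hb] at this
      convert this
    rw [← Finset.sum_filter_add_sum_filter_not T.boxes (fun J => 0 ≤ e J)]
    have e1 : ∑ J ∈ T.boxes.filter (fun J => 0 ≤ e J), |e J|
        = ∑ J ∈ T.boxes.filter (fun J => 0 ≤ e J), e J :=
      Finset.sum_congr rfl fun J hJ => abs_of_nonneg (Finset.mem_filter.1 hJ).2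
    have e2 : ∑ J ∈ T.boxes.filter (fun J => ¬ 0 ≤ e J), |e J|
        = - ∑ J ∈ T.boxes.filter (fun J => ¬ 0 ≤ e J), e J := by
      rw [← Finset.sum_neg_distrib]
      exact Finset.sum_congr rfl fun J hJ => abs_of_neg (not_le.1 (Finset.mem_filter.1 hJ).2)
    rw [e1, e2]
    linarith [(abs_le.1 hp1).2, (abs_le.1 hp2).1]
  have h2 : integralSum (fun p : Fin 1 → ℝ => z (p 0) * f (p 0)) BoxAdditiveMap.volume T
      - integralSum (fun p : Fin 1 → ℝ => z (p 0)) (hkInc F ⊤).toSMul T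
      = ∑ J ∈ T.boxes, z (T.tag J 0) * e J := by
    unfold integralSum
    rw [← Finset.sum_sub_distrib]
    refine Finset.sum_congr rfl fun J hJ => ?_
    rw [hk_vol, BoxAdditiveMap.toSMul_apply, hkInc_apply, hF _ _ (J.lower_lt_upper 0), he]
    simp only [smul_eq_mul]
    ring
  have h3 : |∑ J ∈ T.boxes, z (T.tag J 0) * e J| ≤ M * (2 * ε) := by
    refine (Finset.abs_sum_le_sum_abs _ _).trans ?_
    refine le_trans ?_ (mul_le_mul_of_nonneg_left habs hM)
    rw [Finset.mul_sum]
    refine Finset.sum_le_sum fun J _ => ?_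
    rw [abs_mul]
    exact mul_le_mul_of_nonneg_right (hz _) (abs_nonneg _)
  rw [← h2] at h3
  have := dist_triangle (integralSum (fun p : Fin 1 → ℝ => z (p 0) * f (p 0)) BoxAdditiveMap.volume T)
    (integralSum (fun p : Fin 1 → ℝ => z (p 0)) (hkInc F ⊤).toSMul T) y
  rw [Real.dist_eq (integralSum (fun p : Fin 1 → ℝ => z (p 0) * f (p 0)) BoxAdditiveMap.volume T)
    (integralSum (fun p : Fin 1 → ℝ => z (p 0)) (hkInc F ⊤).toSMul T)] at this
  refine this.trans ?_
  linarith

end prim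

/-- Truncated exponential. -/
def hkz (c r K t : ℝ) : ℝ := if |t - c| ≤ r then Real.exp (t - c) * K else 0

/-- Stieltjes primitive of the exponential against `F`. -/
def hkPhi (c r K : ℝ) (F : ℝ → ℝ) (t : ℝ) : ℝ :=
  Real.exp (t - c) * K * F t - ∫ s in (c - r)..t, Real.exp (s - c) * K * F s

/-- The primitive of `hkz * f`. -/
def hkH (c r K : ℝ) (F : ℝ → ℝ) (t : ℝ) : ℝ := hkPhi c r K F (max (c - r) (min t (c + r)))

theorem hkPhi_continuous (c r K : ℝ) (F : ℝ → ℝ) (hF : Continuous F) :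
    Continuous (hkPhi c r K F) := by
  unfold hkPhi
  refine Continuous.sub (by fun_prop) ?_
  exact intervalIntegral.continuous_primitive (fun a b => Continuous.intervalIntegrable (by fun_prop) _ _) _

theorem hkH_continuous (c r K : ℝ) (F : ℝ → ℝ) (hF : Continuous F) :
    Continuous (hkH c r K F) := by
  have := hkPhi_continuous c r K F hF
  unfold hkH
  fun_prop

theorem hkz_abs_le (c r K : ℝ) (hr : 0 < r) (hK : 0 < K) (t : ℝ) :
    |hkz c r K t| ≤ Real.exp r * K := by
  unfold hkz
  split_ifs with h
  · rw [abs_of_pos (by positivity)]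
    gcongr
    exact (abs_le.1 h).2
  · simp; positivity

/-- The pointwise estimate. -/
theorem hkPhi_est (c r K : ℝ) (hr : 0 < r) (hK : 0 < K) (F : ℝ → ℝ) (hF : Continuous F)
    (u x v η : ℝ) (hux : u ≤ x) (hxv : x ≤ v) (hv : v ≤ c + r)
    (hη : ∀ s ∈ Set.Icc u v, |F s - F x| ≤ η) :
    |Real.exp (x - c) * K * (F v - F u) - (hkPhi c r K F v - hkPhi c r K F u)|
      ≤ 2 * (Real.exp r * K) * η * (v - u) := by
  set M := Real.exp r * K with hM
  have hM0 : 0 < M := by positivity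
  set g : ℝ → ℝ := fun s => Real.exp (s - c) * K with hg
  have hη0 : 0 ≤ η := (abs_nonneg _).trans (hη x ⟨hux, hxv⟩)
  have hgM : ∀ s, s ≤ v → g s ≤ M := by
    intro s hs
    simp only [hg, hM]
    gcongr
    linarith
  have hg0 : ∀ s, 0 < g s := fun s => by simp only [hg]; positivity
  have hgc : Continuous g := by fun_prop
  have hgl : ∀ s t, s ≤ t → t ≤ v → |g t - g s| ≤ M * (t - s) := by
    intro s t hst htv
    have h1 : g s = g t * Real.exp (s - t) := by
      simp only [hg]
      rw [mul_right_comm, ← Real.exp_add]; congr 2; ring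
    have h2 := Real.add_one_le_exp (s - t)
    have h3 : Real.exp (s - t) ≤ 1 := Real.exp_le_one_iff.2 (by linarith)
    rw [h1, abs_of_nonneg (by nlinarith [hg0 t])]
    nlinarith [hg0 t, hgM t htv, mul_le_mul (hgM t htv) (by linarith : 1 - Real.exp (s-t) ≤ t - s) (by linarith) hM0.le]
  have hgFint : ∀ a b, IntervalIntegrable (fun s => g s * F s) volume a b :=
    fun a b => Continuous.intervalIntegrable (by fun_prop) _ _
  have hPhi : hkPhi c r K F v - hkPhi c r K F u = g v * F v - g u * F u - ∫ s in u..v, g s * F s := by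
    have := intervalIntegral.integral_add_adjacent_intervals (hgFint (c - r) u) (hgFint u v)
    unfold hkPhi
    simp only [hg] at this ⊢
    linarith
  have hgi : ∫ s in u..v, g s = g v - g u := by
    refine intervalIntegral.integral_eq_sub_of_hasDerivAt (fun s _ => ?_) (hgc.intervalIntegrable _ _)
    have := ((hasDerivAt_id s).sub_const c).exp.mul_const K
    simpa using this
  have hsplit : ∫ s in u..v, g s * (F s - F x) = (∫ s in u..v, g s * F s) - (g v - g u) * F x := by
    rw [← hgi, ← intervalIntegral.integral_mul_const, ← intervalIntegral.integral_sub (hgFint u v)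
      (Continuous.intervalIntegrable (by fun_prop) _ _)]
    congr 1; funext s; ring
  have hbd : |∫ s in u..v, g s * (F s - F x)| ≤ M * η * (v - u) := by
    have := intervalIntegral.norm_integral_le_of_norm_le_const (a := u) (b := v)
      (f := fun s => g s * (F s - F x)) (C := M * η) (by
        intro s hs
        rw [Set.uIoc_of_le (hux.trans hxv)] at hs
        rw [Real.norm_eq_abs, abs_mul, abs_of_pos (hg0 s)]
        exact mul_le_mul (hgM s hs.2) (hη s ⟨hs.1.le, hs.2⟩) (abs_nonneg _) hM0.le)
    rwa [Real.norm_eq_abs, abs_of_nonneg (by linarith : 0 ≤ v - u)] at this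
  have key : Real.exp (x - c) * K * (F v - F u) - (hkPhi c r K F v - hkPhi c r K F u)
      = (∫ s in u..v, g s * (F s - F x)) - (g v - g x) * (F v - F x) - (g x - g u) * (F u - F x) := by
    rw [hPhi, hsplit]
    change g x * (F v - F u) - _ = _
    ring
  rw [key]
  have b1 : |(g v - g x) * (F v - F x)| ≤ M * (v - x) * η := by
    rw [abs_mul]
    exact mul_le_mul (hgl x v hxv le_rfl) (hη v ⟨hux.trans hxv, le_rfl⟩) (abs_nonneg _)
      (mul_nonneg hM0.le (by linarith))
  have b2 : |(g x - g u) * (F u - F x)| ≤ M * (x - u) * η := by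
    rw [abs_mul]
    exact mul_le_mul (hgl u x hux hxv) (hη u ⟨le_rfl, hux.trans hxv⟩) (abs_nonneg _)
      (mul_nonneg hM0.le (by linarith))
  rw [abs_le] at hbd b1 b2 ⊢
  constructor <;> nlinarith

theorem hkz_stieltjes (c r K : ℝ) (hr : 0 < r) (hK : 0 < K) (F : ℝ → ℝ) (hF : Continuous F)
    (a d : ℝ) (had : a < d) :
    BoxIntegral.HasIntegral (hkBox a d had) BoxIntegral.IntegrationParams.Henstock
      (fun p => hkz c r K (p 0)) (hkInc F ⊤).toSMul (hkH c r K F d - hkH c r K F a) := by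
  have hHc := hkH_continuous c r K F hF
  have hball : ∀ (J : BoxIntegral.Box (Fin 1)) (x : Fin 1 → ℝ) (δ : ℝ),
      BoxIntegral.Box.Icc J ⊆ Metric.closedBall x δ →
      x 0 - δ ≤ J.lower 0 ∧ J.upper 0 ≤ x 0 + δ := by
    intro J x δ h
    have h1 := h J.lower_mem_Icc
    have h2 := h J.upper_mem_Icc
    rw [Metric.mem_closedBall] at h1 h2
    have h1' := (dist_le_pi_dist _ _ 0).trans h1
    have h2' := (dist_le_pi_dist _ _ 0).trans h2
    rw [Real.dist_eq, abs_le] at h1' h2'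
    constructor <;> linarith
  have hcont : ∀ (G : ℝ → ℝ), Continuous G → ∀ x ε, 0 < ε → ∃ δ > 0, ∀ s, |s - x| ≤ δ → |G s - G x| ≤ ε := by
    intro G hG x ε hε
    obtain ⟨δ, hδ, h⟩ := Metric.continuousAt_iff.1 (hG.continuousAt (x := x)) ε hε
    refine ⟨δ / 2, half_pos hδ, fun s hs => ?_⟩
    have := h (x := s) (by rw [Real.dist_eq]; linarith)
    rw [Real.dist_eq] at this
    exact this.le
  refine BoxIntegral.HasIntegral.of_le_Henstock_of_forall_isLittleO le_rfl
    (hkInc id _) (fun J => ?_) (hkInc (hkH c r K F) _) {fun _ => c - r, fun _ => c + r}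
    (Set.toFinite _).countable ?_ ?_
  · rw [hkInc_apply]; simp only [id]; linarith [J.lower_lt_upper 0]
  · intro _ x _ ε hε
    set M := Real.exp r * K with hM
    have hM0 : 0 < M := by positivity
    obtain ⟨δ₁, hδ₁, h1⟩ := hcont F hF (x 0) (ε / (4 * M)) (by positivity)
    obtain ⟨δ₂, hδ₂, h2⟩ := hcont _ hHc (x 0) (ε / 4) (by positivity)
    refine ⟨min δ₁ δ₂, lt_min hδ₁ hδ₂, fun J _ hJ hx _ => ?_⟩
    obtain ⟨hl, hu⟩ := hball J x _ hJ
    rw [hk_mem_Icc] at hx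
    have m1 := min_le_left δ₁ δ₂
    have m2 := min_le_right δ₁ δ₂
    have a1 := h1 (J.lower 0) (by rw [abs_le]; constructor <;> linarith)
    have a2 := h1 (J.upper 0) (by rw [abs_le]; constructor <;> linarith)
    have a3 := h2 (J.lower 0) (by rw [abs_le]; constructor <;> linarith)
    have a4 := h2 (J.upper 0) (by rw [abs_le]; constructor <;> linarith)
    rw [BoxIntegral.BoxAdditiveMap.toSMul_apply, hkInc_apply, hkInc_apply, Real.dist_eq, smul_eq_mul]
    have a5 : |F (J.upper 0) - F (J.lower 0)| ≤ ε / (2 * M) := by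
      have : ε / (2 * M) = ε / (4 * M) + ε / (4 * M) := by field_simp; norm_num
      rw [this]
      rw [abs_le] at a1 a2 ⊢
      constructor <;> linarith
    have a6 : |(F (J.upper 0) - F (J.lower 0)) * hkz c r K (x 0)| ≤ ε / 2 := by
      rw [abs_mul]
      have := mul_le_mul a5 (hkz_abs_le c r K hr hK (x 0)) (abs_nonneg _) (by positivity)
      have e : ε / (2 * M) * M = ε / 2 := by field_simp
      linarith
    rw [abs_le] at a3 a4 a6 ⊢
    constructor <;> linarith
  · intro _ x hx ε hε
    have hx1 : x 0 ≠ c - r := by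
      intro h; apply hx.2; left; funext i; rw [Subsingleton.elim i 0, h]
    have hx2 : x 0 ≠ c + r := by
      intro h; apply hx.2; right
      change x = _
      funext i; rw [Subsingleton.elim i 0, h]
    have htriv : (x 0 < c - r ∨ c + r < x 0) ∨ (c - r < x 0 ∧ x 0 < c + r) := by
      rcases lt_or_gt_of_ne hx1 with h | h
      · exact Or.inl (Or.inl h)
      · rcases lt_or_gt_of_ne hx2 with h' | h'
        · exact Or.inr ⟨h, h'⟩
        · exact Or.inl (Or.inr h')
    rcases htriv with (h | h) | ⟨h, h'⟩
    · refine ⟨(c - r - x 0) / 2, by linarith, fun J _ hJ hx _ => ?_⟩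
      obtain ⟨hl, hu⟩ := hball J x _ hJ
      have hlu := J.lower_lt_upper 0
      have e0 : hkz c r K (x 0) = 0 := by
        unfold hkz; rw [if_neg]; rw [abs_le]; rintro ⟨h1, h2⟩; linarith
      rw [BoxIntegral.BoxAdditiveMap.toSMul_apply, hkInc_apply, hkInc_apply, hkInc_apply, e0]
      have e1 : ∀ s, s < c - r → hkH c r K F s = hkPhi c r K F (c - r) := by
        intro s hs; unfold hkH; rw [min_eq_left (by linarith), max_eq_left (by linarith)]
      rw [e1 _ (by linarith), e1 _ (by linarith)]
      simp
      exact hε.le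
    · refine ⟨(x 0 - (c + r)) / 2, by linarith, fun J _ hJ hx _ => ?_⟩
      obtain ⟨hl, hu⟩ := hball J x _ hJ
      have hlu := J.lower_lt_upper 0
      have e0 : hkz c r K (x 0) = 0 := by
        unfold hkz; rw [if_neg]; rw [abs_le]; rintro ⟨h1, h2⟩; linarith
      rw [BoxIntegral.BoxAdditiveMap.toSMul_apply, hkInc_apply, hkInc_apply, hkInc_apply, e0]
      have e1 : ∀ s, c + r < s → hkH c r K F s = hkPhi c r K F (c + r) := by
        intro s hs; unfold hkH; rw [min_eq_right (by linarith), max_eq_right (by linarith)]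
      rw [e1 _ (by linarith), e1 _ (by linarith)]
      simp
      exact hε.le
    · set M := Real.exp r * K with hM
      have hM0 : 0 < M := by positivity
      obtain ⟨δ₁, hδ₁, h1⟩ := hcont F hF (x 0) (ε / (2 * M)) (by positivity)
      refine ⟨min δ₁ (min (x 0 - (c - r)) (c + r - x 0)),
        lt_min hδ₁ (lt_min (by linarith) (by linarith)), fun J _ hJ hx _ => ?_⟩
      obtain ⟨hl, hu⟩ := hball J x _ hJ
      rw [hk_mem_Icc] at hx
      have m1 := min_le_left δ₁ (min (x 0 - (c - r)) (c + r - x 0))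
      have m2 := (min_le_right δ₁ (min (x 0 - (c - r)) (c + r - x 0))).trans (min_le_left _ _)
      have m3 := (min_le_right δ₁ (min (x 0 - (c - r)) (c + r - x 0))).trans (min_le_right _ _)
      have e0 : hkz c r K (x 0) = Real.exp (x 0 - c) * K := by
        unfold hkz; rw [if_pos]; rw [abs_le]; constructor <;> linarith
      have e1 : ∀ s, c - r ≤ s → s ≤ c + r → hkH c r K F s = hkPhi c r K F s := by
        intro s hs hs'; unfold hkH; rw [min_eq_left (by linarith), max_eq_right (by linarith)]
      rw [BoxIntegral.BoxAdditiveMap.toSMul_apply, hkInc_apply, hkInc_apply, hkInc_apply, e0,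
        smul_eq_mul, Real.dist_eq, e1 _ (by linarith) (by linarith), e1 _ (by linarith) (by linarith)]
      have := hkPhi_est c r K hr hK F hF (J.lower 0) (x 0) (J.upper 0) (ε / (2 * M)) hx.1 hx.2
        (by linarith) (fun s hs => h1 s (by rw [abs_le]; constructor <;> linarith [hs.1, hs.2]))
      have e2 : 2 * (Real.exp r * K) * (ε / (2 * M)) = ε := by rw [← hM]; field_simp
      rw [e2] at this
      rw [mul_comm (F _ - F _)]
      exact this

theorem hkPhi_bound (c r K : ℝ) (hr : 0 < r) (hK : 0 < K) (F : ℝ → ℝ) (hF : Continuous F)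
    (h0 : F (c - r) = 0) (A : ℝ) (hA : ∀ t, c - r ≤ t → |F t| ≤ A) :
    |hkPhi c r K F (c + r) - hkPhi c r K F (c - r)| ≤ 2 * (Real.exp r * K) * A := by
  set g : ℝ → ℝ := fun s => Real.exp (s - c) * K with hg
  have hg0 : ∀ s, 0 < g s := fun s => by simp only [hg]; positivity
  have hgc : Continuous g := by fun_prop
  have hA0 : 0 ≤ A := (abs_nonneg _).trans (hA _ le_rfl)
  have hgi : ∫ s in (c - r)..(c + r), g s * A = (g (c + r) - g (c - r)) * A := by
    rw [intervalIntegral.integral_mul_const]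
    congr 1
    refine intervalIntegral.integral_eq_sub_of_hasDerivAt (fun s _ => ?_) (hgc.intervalIntegrable _ _)
    have := ((hasDerivAt_id s).sub_const c).exp.mul_const K
    simpa using this
  have hb : |∫ s in (c - r)..(c + r), g s * F s| ≤ (g (c + r) - g (c - r)) * A := by
    rw [← hgi, ← Real.norm_eq_abs]
    refine intervalIntegral.norm_integral_le_of_norm_le (by linarith) ?_
      (Continuous.intervalIntegrable (by fun_prop) _ _)
    refine Filter.Eventually.of_forall fun s hs => ?_
    rw [Real.norm_eq_abs, abs_mul, abs_of_pos (hg0 s)]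
    exact mul_le_mul_of_nonneg_left (hA s hs.1.le) (hg0 s).le
  have e1 : g (c + r) = Real.exp r * K := by simp [hg]
  unfold hkPhi
  rw [h0, intervalIntegral.integral_same]
  change |g (c + r) * F (c + r) - (∫ s in (c - r)..(c + r), g s * F s) - _| ≤ _
  rw [← e1]
  have h2 : |g (c + r) * F (c + r)| ≤ g (c + r) * A := by
    rw [abs_mul, abs_of_pos (hg0 _)]
    exact mul_le_mul_of_nonneg_left (hA _ (by linarith)) (hg0 _).le
  have h3 : 0 ≤ g (c - r) * A := mul_nonneg (hg0 _).le hA0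
  rw [abs_le] at hb h2 ⊢
  constructor <;> linarith

theorem hkz_mono (c r K : ℝ) (hK : 0 < K) : MonotoneOn (hkz c r K) (Set.Iic (c + r)) := by
  intro s hs t ht hst
  simp only [Set.mem_Iic] at hs ht
  unfold hkz
  split_ifs with h1 h2 h2
  · gcongr
  · exfalso; apply h2; rw [abs_le] at h1 ⊢; constructor <;> linarith
  · positivity
  · exact le_rfl

theorem hkz_anti (c r K : ℝ) (hK : 0 < K) :
    MonotoneOn (hkz c r K ∘ Neg.neg) (Set.Iic (-(c + r))) := by
  intro s hs t ht hst
  simp only [Set.mem_Iic] at hs ht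
  simp only [Function.comp, hkz]
  split_ifs with h1 h2 h2
  · have : -s = -t := by rw [abs_le] at h1 h2; linarith
    rw [this]
  · exfalso; apply h2
    have : -s = -t := by rw [abs_le] at h1; linarith
    rwa [← this]
  · positivity
  · exact le_rfl

theorem hkz_nonneg (c r K t : ℝ) (hK : 0 < K) : 0 ≤ hkz c r K t := by
  unfold hkz; split_ifs <;> positivity

theorem hk_var_mono (g : ℝ → ℝ) (q M : ℝ) (hg : MonotoneOn g (Set.Iic q)) (h0 : ∀ t, 0 ≤ g t)
    (hM : ∀ t, g t ≤ M) : eVariationOn g (Set.Iic q) ≤ ENNReal.ofReal M := by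
  rw [eVariationOn.eq_biSup_inter_Icc]
  refine iSup₂_le fun p hp => ?_
  rw [hg.eVariationOn_eq hp.1 hp.2.1]
  exact ENNReal.ofReal_le_ofReal (by linarith [h0 p.1, hM p.2])

theorem hkz_var_le (c r K : ℝ) (hr : 0 < r) (hK : 0 < K) :
    eVariationOn (hkz c r K) Set.univ ≤ ENNReal.ofReal (2 * (Real.exp r * K)) := by
  have hM : ∀ t, hkz c r K t ≤ Real.exp r * K := fun t =>
    (le_abs_self _).trans (hkz_abs_le c r K hr hK t)
  have h1 := hk_var_mono _ (c + r) _ (hkz_mono c r K hK) (fun t => hkz_nonneg c r K t hK) hM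
  have h2 := hk_var_mono _ (-(c + r)) (Real.exp r * K) (hkz_anti c r K hK)
    (fun t => hkz_nonneg c r K _ hK) (fun t => hM _)
  have h3 : eVariationOn (hkz c r K) (Set.Ici (c + r)) ≤
      eVariationOn (hkz c r K ∘ Neg.neg) (Set.Iic (-(c + r))) := by
    have := eVariationOn.comp_le_of_antitoneOn (hkz c r K ∘ Neg.neg) (s := Set.Iic (-(c + r)))
      (t := Set.Ici (c + r)) Neg.neg (fun a _ b _ h => neg_le_neg h)
      (fun a ha => Set.mem_Iic.2 (neg_le_neg (Set.mem_Ici.1 ha)))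
    have e : (hkz c r K ∘ Neg.neg) ∘ Neg.neg = hkz c r K := by funext t; simp
    rwa [e] at this
  rw [← Set.Iic_union_Ici (a := c + r), eVariationOn.union _ isGreatest_Iic isLeast_Ici, two_mul,
    ENNReal.ofReal_add (by positivity) (by positivity)]
  exact add_le_add h1 (h3.trans h2)

theorem hkz_var_ge (c r K : ℝ) (hr : 0 < r) (hK : 0 < K) :
    ENNReal.ofReal (2 * (Real.exp r * K)) ≤ eVariationOn (hkz c r K) Set.univ := by
  have e1 : hkz c r K (c + r) = Real.exp r * K := by
    unfold hkz; rw [if_pos (by rw [add_sub_cancel_left, abs_of_pos hr]), add_sub_cancel_left]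
  have e2 : hkz c r K (c + r + 1) = 0 := by
    unfold hkz; rw [if_neg]; rw [abs_le]; rintro ⟨_, h⟩; linarith
  have e3 : hkz c r K (c - r - 1) = 0 := by
    unfold hkz; rw [if_neg]; rw [abs_le]; rintro ⟨h, _⟩; linarith
  have hp : 0 < Real.exp r * K := by positivity
  rw [← Set.Iic_union_Ici (a := c + r), eVariationOn.union _ isGreatest_Iic isLeast_Ici, two_mul,
    ENNReal.ofReal_add (by positivity) (by positivity)]
  refine add_le_add ?_ ?_
  · have := eVariationOn.edist_le (hkz c r K) (s := Set.Iic (c + r)) (x := c + r) (y := c - r - 1)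
      (by simp) (by simp only [Set.mem_Iic]; linarith)
    rwa [e1, e3, edist_dist, Real.dist_eq, sub_zero, abs_of_pos hp] at this
  · have := eVariationOn.edist_le (hkz c r K) (s := Set.Ici (c + r)) (x := c + r) (y := c + r + 1)
      (by simp) (by simp only [Set.mem_Ici]; linarith)
    rwa [e1, e2, edist_dist, Real.dist_eq, sub_zero, abs_of_pos hp] at this

theorem xiK_eq (x : ℕ → ℝ) (b : ℕ ≃ ℕ × ℕ) (k : ℕ) :
    xiK x b k = hkz (x (b k).2) (Real.pi / (2 * (3 * 2 ^ (b k).1)))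
      ((3 : ℝ) ^ (-(Real.pi + |x (b k).2|))) := by
  funext t
  unfold xiK hkz xi1
  by_cases h : |t - x (b k).2| ≤ Real.pi / (2 * (3 * 2 ^ (b k).1))
  · rw [if_pos h, if_pos h, if_pos]
    refine h.trans ?_
    have : (2:ℝ) ^ ((b k).1 + 1 + 1) = 4 * 2 ^ (b k).1 := by ring
    rw [this]
    refine div_le_div_of_nonneg_left Real.pi_pos.le (by positivity) ?_
    have : (0:ℝ) < 2 ^ (b k).1 := by positivity
    linarith
  · rw [if_neg h, if_neg h]

/-- Lemma 17 (one-dimensional case): Henstock–Kurzweil integrable functions lie in `SD²`.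
Each `ξ_k` has bounded total variation with `V = sup_k V(ξ_k) < ∞`; if `f : ℝ → ℝ` is
HK-integrable on every compact interval (with integrals `Ival a b`) and has finite
Alexiewicz norm `‖f‖_A = sup_{a ≤ b} |(HK)∫_a^b f|`, then each HK integral
`F_k(f) = (HK)∫ ξ_k·f` exists and `‖f‖_{SD²} = (Σ_k 2^(−k)|F_k(f)|²)^{1/2} ≤ V·‖f‖_A < ∞`. -/
theorem HK_subset_SD2 (x : ℕ → ℝ) (hx : IsRationalEnum1 x) (b : ℕ ≃ ℕ × ℕ)
    (f : ℝ → ℝ) (Ival : ℝ → ℝ → ℝ)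
    (hInt : ∀ a c : ℝ, ∀ h : a < c, HKHasIntegral f a c h (Ival a c))
    (hAlex : BddAbove {r : ℝ | ∃ (a c : ℝ) (_ : a < c), r = |Ival a c|}) :
    (∀ k : ℕ, eVariationOn (xiK x b k) Set.univ < ⊤) ∧
    (⨆ k : ℕ, eVariationOn (xiK x b k) Set.univ) < ⊤ ∧
    ∃ Fv : ℕ → ℝ,
      (∀ (k : ℕ) (a c : ℝ) (h : a < c), Function.support (xiK x b k) ⊆ Set.Icc a c →
        HKHasIntegral (fun t => xiK x b k t * f t) a c h (Fv k)) ∧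
      Summable (fun k : ℕ => (1 / 2 : ℝ) ^ (k + 1) * Fv k ^ 2) ∧
      Real.sqrt (∑' k : ℕ, (1 / 2 : ℝ) ^ (k + 1) * Fv k ^ 2) ≤
        (⨆ k : ℕ, eVariationOn (xiK x b k) Set.univ).toReal *
          sSup {r : ℝ | ∃ (a c : ℝ) (_ : a < c), r = |Ival a c|} := by
  set A := sSup {r : ℝ | ∃ (a c : ℝ) (_ : a < c), r = |Ival a c|} with hA
  have hIA : ∀ u v, u < v → |Ival u v| ≤ A := fun u v h => le_csSup hAlex ⟨u, v, h, rfl⟩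
  have hA0 : 0 ≤ A := (abs_nonneg _).trans (hIA 0 1 one_pos)
  let r : ℕ → ℝ := fun k => Real.pi / (2 * (3 * 2 ^ (b k).1))
  let K : ℕ → ℝ := fun k => (3 : ℝ) ^ (-(Real.pi + |x (b k).2|))
  let c : ℕ → ℝ := fun k => x (b k).2
  have hxi : ∀ k, xiK x b k = hkz (c k) (r k) (K k) := fun k => xiK_eq x b k
  have hr : ∀ k, 0 < r k := fun k => by have := Real.pi_pos; simp only [r]; positivity
  have hK : ∀ k, 0 < K k := fun k => by simp only [K]; positivity
  have hr1 : ∀ k, r k ≤ Real.pi := fun k => by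
    refine div_le_self Real.pi_pos.le ?_
    have : (1:ℝ) ≤ 2 ^ (b k).1 := one_le_pow₀ (by norm_num)
    linarith
  have hK1 : ∀ k, K k ≤ 1 := fun k =>
    Real.rpow_le_one_of_one_le_of_nonpos (by norm_num)
      (by have := Real.pi_pos; have := abs_nonneg (x (b k).2); linarith)
  have hV : (⨆ k : ℕ, eVariationOn (xiK x b k) Set.univ) < ⊤ := by
    refine lt_of_le_of_lt (iSup_le fun k => ?_) (ENNReal.ofReal_lt_top (r := 2 * (Real.exp Real.pi * 1)))
    rw [hxi]
    refine (hkz_var_le _ _ _ (hr k) (hK k)).trans (ENNReal.ofReal_le_ofReal ?_)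
    have := mul_le_mul (Real.exp_le_exp.2 (hr1 k)) (hK1 k) (hK k).le (Real.exp_pos _).le
    linarith
  set V := (⨆ k : ℕ, eVariationOn (xiK x b k) Set.univ) with hVdef
  have hVk : ∀ k, eVariationOn (xiK x b k) Set.univ ≤ V := fun k =>
    le_iSup (fun k => eVariationOn (xiK x b k) Set.univ) k
  refine ⟨fun k => (hVk k).trans_lt hV, hV, ?_⟩
  choose F hFc hF0 hF using fun k => hk_prim hInt (c k - r k)
  let Fv : ℕ → ℝ := fun k =>
    hkPhi (c k) (r k) (K k) (F k) (c k + r k) - hkPhi (c k) (r k) (K k) (F k) (c k - r k)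
  have hFv : ∀ k, |Fv k| ≤ V.toReal * A := by
    intro k
    refine (hkPhi_bound _ _ _ (hr k) (hK k) (F k) (hFc k) (hF0 k) A ?_).trans ?_
    · intro t ht
      rcases ht.lt_or_eq with h | h
      · have := hF k _ _ h
        rw [hF0, sub_zero] at this
        rw [this]; exact hIA _ _ h
      · rw [← h, hF0]; simpa using hA0
    · refine mul_le_mul_of_nonneg_right ?_ hA0
      have h1 := hkz_var_ge (c k) _ _ (hr k) (hK k)
      rw [← hxi] at h1
      exact (ENNReal.ofReal_le_iff_le_toReal hV.ne).1 (h1.trans (hVk k))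
  have hgeo : HasSum (fun k : ℕ => (1 / 2 : ℝ) ^ (k + 1) * (V.toReal * A) ^ 2) ((V.toReal * A) ^ 2) := by
    have := ((hasSum_geometric_two).mul_left (1/2)).mul_right ((V.toReal * A) ^ 2)
    have e1 : (1 / 2 * 2 : ℝ) * (V.toReal * A) ^ 2 = (V.toReal * A) ^ 2 := by ring
    rw [e1] at this
    have e2 : (fun k : ℕ => (1 / 2 : ℝ) ^ (k + 1) * (V.toReal * A) ^ 2)
        = fun k : ℕ => 1 / 2 * (1 / 2 : ℝ) ^ k * (V.toReal * A) ^ 2 := by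
      funext k; ring
    rw [e2]
    exact this
  have hle : ∀ k, (1 / 2 : ℝ) ^ (k + 1) * Fv k ^ 2 ≤ (1 / 2 : ℝ) ^ (k + 1) * (V.toReal * A) ^ 2 := by
    intro k
    refine mul_le_mul_of_nonneg_left ?_ (by positivity)
    rw [← sq_abs]
    exact pow_le_pow_left₀ (abs_nonneg _) (hFv k) 2
  have hsum : Summable (fun k : ℕ => (1 / 2 : ℝ) ^ (k + 1) * Fv k ^ 2) :=
    Summable.of_nonneg_of_le (fun k => by positivity) hle hgeo.summable
  refine ⟨Fv, ?_, hsum, ?_⟩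
  · intro k a d had hsupp
    have hmem : ∀ t, |t - c k| ≤ r k → t ∈ Set.Icc a d := by
      intro t ht
      apply hsupp
      rw [Function.mem_support, hxi]
      unfold hkz
      rw [if_pos ht]
      have := hK k
      positivity
    have hq := (hmem (c k + r k) (by rw [add_sub_cancel_left, abs_of_pos (hr k)])).2
    have hp := (hmem (c k - r k) (by rw [sub_sub_cancel_left, abs_neg, abs_of_pos (hr k)])).1
    have h := hkz_stieltjes (c k) (r k) (K k) (hr k) (hK k) (F k) (hFc k) a d had
    have e1 : hkH (c k) (r k) (K k) (F k) d = hkPhi (c k) (r k) (K k) (F k) (c k + r k) := by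
      unfold hkH; rw [min_eq_right hq, max_eq_right (by linarith [hr k])]
    have e2 : hkH (c k) (r k) (K k) (F k) a = hkPhi (c k) (r k) (K k) (F k) (c k - r k) := by
      unfold hkH; rw [min_eq_left (by linarith [hr k]), max_eq_left hp]
    rw [e1, e2] at h
    rw [hxi]
    exact hk_mul hInt (F k) (hF k) _ _ (hkz_abs_le _ _ _ (hr k) (hK k)) a d had _ h
  · rw [Real.sqrt_le_left (by positivity), ← hgeo.tsum_eq]
    exact hsum.tsum_le_tsum hle hgeo.summable

end
end
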